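/- (Fixed-point characterization of the Rényi-divergence minimizer) Fix α ∈ (0,1), a finite alphabet X, a distribution P on X, and positive definite density matrices (W_x)_{x∈X} on ℂ^d. A density matrix σ minimizes σ ↦ Σ_x P(x) D_α(W_x‖σ) over S(ℂ^d) if and only if σ is proportional to (Σ_x P(x) W_x^α / Tr[W_x^α σ^{1-α}])^{1/α}, i.e. σ = N^{-1} (Σ_x P(x) W_x^α / Tr[W_x^α σ^{1-α}])^{1/α} with N the normalizing trace. -/

import Mathlib

open Matrix
open scoped BigOperators ComplexOrder

noncomputable section

variable {n : Type*} [Fintype n] [DecidableEq n]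

/-- Apply a real function spectrally to a Hermitian matrix (junk value `0` otherwise). -/
def specFun (f : ℝ → ℝ) (A : Matrix n n ℂ) : Matrix n n ℂ :=
  if hA : A.IsHermitian then
    (hA.eigenvectorUnitary : Matrix n n ℂ) *
      Matrix.diagonal (fun i => ((f (hA.eigenvalues i) : ℝ) : ℂ)) *
      star (hA.eigenvectorUnitary : Matrix n n ℂ)
  else 0

/-- Spectral real power of a matrix (`0 ^ α = 0` for `α ∈ (0,1)` via `Real.rpow`). -/
def mPow (A : Matrix n n ℂ) (α : ℝ) : Matrix n n ℂ := specFun (fun x => x ^ α) A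

/-- Density matrices: positive semidefinite with unit trace. -/
def IsDensity (A : Matrix n n ℂ) : Prop := A.PosSemidef ∧ A.trace = 1

/-- The Petz Rényi divergence `D_α(ρ‖σ) = (1/(α-1)) log Tr[ρ^α σ^{1-α}]`. -/
def petzD (ρ σ : Matrix n n ℂ) (α : ℝ) : ℝ :=
  (1 / (α - 1)) * Real.log (((mPow ρ α * mPow σ (1 - α)).trace).re)

/-- The (unnormalized) fixed-point map
`σ ↦ (Σ_x P(x) W_x^α / Tr[W_x^α σ^{1-α}])^{1/α}`. -/
def fixedPtMap {d : ℕ} {X : Type*} [Fintype X] (P : X → ℝ)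
    (W : X → Matrix (Fin d) (Fin d) ℂ) (α : ℝ) (σ : Matrix (Fin d) (Fin d) ℂ) :
    Matrix (Fin d) (Fin d) ℂ :=
  mPow (∑ x, (((P x / ((mPow (W x) α * mPow σ (1 - α)).trace).re) : ℝ) : ℂ) •
    mPow (W x) α) (1 / α)

/-!
Write `Q(ρ, σ) = Tr[ρ^α σ^{1-α}]`. As `α - 1 < 0`, minimizing the averaged divergence is
maximizing `σ ↦ Σ_x P(x) log Q(W_x, σ)`, a concave function of `σ^{1-α}` with gradient
`F = Σ_x P(x) W_x^α / Q(W_x, σ)`. The fixed-point equation says `F = c σ^α` for some `c > 0`, and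
the trace form of Young's inequality, `Q(σ, τ) ≤ 1` for density matrices with equality only if
`σ = τ`, identifies `σ` as the unique maximizer of `τ ↦ Tr[σ^α τ^{1-α}]`.

If `F = c σ^α`, the tangent inequality for `log` bounds the objective at `τ` by that at `σ`.
Conversely, write `F = c φ^α` with `φ` a density matrix. The matrices `τ^{1-α}` do not form a
convex set, but each point of the segment from `σ^{1-α}` to `φ^{1-α}` is dominated by some
`τ^{1-α}`, again by Young's inequality. Hence the derivative along the segment is nonpositive at a
maximizer `σ`, which reads `Q(φ, σ) ≥ 1`, and so `φ = σ`.
-/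

section SpectralPower

open scoped MatrixOrder

lemma specFun_eq_cfc (f : ℝ → ℝ) {A : Matrix n n ℂ} (hA : A.IsHermitian) :
    specFun f A = cfc f A := by
  rw [hA.cfc_eq, specFun, dif_pos hA]
  simp [Matrix.IsHermitian.cfc, Unitary.conjStarAlgAut_apply, Function.comp_def]

variable {A : Matrix n n ℂ}

lemma specFun_id (hA : A.IsHermitian) : specFun (fun x => x) A = A := by
  rw [specFun_eq_cfc _ hA]
  exact cfc_id' ℝ A hA

lemma specFun_one (hA : A.IsHermitian) : specFun (fun _ => 1) A = 1 := by
  rw [specFun_eq_cfc _ hA]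
  exact cfc_const_one ℝ A hA

lemma mPow_eq_rpow (hA : A.PosSemidef) (s : ℝ) : mPow A s = A ^ s := by
  rw [mPow, specFun_eq_cfc _ hA.isHermitian, CFC.rpow_eq_cfc_real hA.nonneg]

lemma mPow_posSemidef (hA : A.PosSemidef) (s : ℝ) : (mPow A s).PosSemidef := by
  rw [mPow_eq_rpow hA]
  exact CFC.rpow_nonneg.posSemidef

lemma mPow_posDef (hA : A.PosDef) (s : ℝ) : (mPow A s).PosDef := by
  rw [mPow_eq_rpow hA.posSemidef, ← Matrix.isStrictlyPositive_iff_posDef]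
  exact hA.isStrictlyPositive.rpow A s

lemma mPow_one (hA : A.PosSemidef) : mPow A 1 = A := by
  rw [mPow_eq_rpow hA, CFC.rpow_one A hA.nonneg]

lemma mPow_mPow (hA : A.PosSemidef) {s t : ℝ} (hs : 0 ≤ s) (ht : 0 ≤ t) :
    mPow (mPow A s) t = mPow A (s * t) := by
  rw [mPow_eq_rpow (mPow_posSemidef hA s), mPow_eq_rpow hA, mPow_eq_rpow hA,
    CFC.rpow_rpow_of_exponent_nonneg A s t hs ht hA.nonneg]

lemma mPow_mPow_of_mul_eq_one (hA : A.PosSemidef) {s t : ℝ} (hs : 0 ≤ s) (hst : s * t = 1) :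
    mPow (mPow A s) t = A := by
  have ht : 0 ≤ t := by
    by_contra! ht
    nlinarith
  rw [mPow_mPow hA hs ht, hst, mPow_one hA]

lemma mPow_mul_mPow (hA : A.PosSemidef) {s t : ℝ} (hs : 0 < s) (ht : 0 < t) :
    mPow A s * mPow A t = mPow A (s + t) := by
  lift s to NNReal using hs.le
  lift t to NNReal using ht.le
  rw [NNReal.coe_pos] at hs ht
  simp only [mPow_eq_rpow hA, ← NNReal.coe_add, ← CFC.nnrpow_eq_rpow hs, ← CFC.nnrpow_eq_rpow ht,
    ← CFC.nnrpow_eq_rpow (add_pos hs ht), CFC.nnrpow_add hs ht]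

lemma mPow_smul (hA : A.PosSemidef) {c : ℝ} (hc : 0 ≤ c) (s : ℝ) :
    mPow (c • A) s = c ^ s • mPow A s := by
  have hself : IsSelfAdjoint A := hA.isHermitian
  rw [mPow, specFun_eq_cfc _ (hA.smul hc).isHermitian, mPow, specFun_eq_cfc _ hA.isHermitian,
    ← cfc_const_mul _ _ A (A.finite_real_spectrum.continuousOn _),
    ← cfc_comp_const_mul c _ A ((A.finite_real_spectrum.image _).continuousOn _) hself]
  exact cfc_congr fun x hx => Real.mul_rpow hc (spectrum_nonneg_of_nonneg hA.nonneg hx)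

lemma mPow_ne_zero (hA : A.PosSemidef) (hA0 : A ≠ 0) {s : ℝ} (hs : 0 < s) : mPow A s ≠ 0 := by
  intro h
  have hinv := mPow_mPow_of_mul_eq_one hA hs.le (mul_inv_cancel₀ hs.ne')
  rw [h, mPow_eq_rpow .zero] at hinv
  exact hA0 (hinv.symm.trans (CFC.zero_rpow (inv_ne_zero hs.ne')))

end SpectralPower

section TracePositivity

variable {A B : Matrix n n ℂ}

omit [DecidableEq n] in
lemma re_trace_pos (hA : A.PosSemidef) (hA0 : A ≠ 0) : 0 < A.trace.re :=
  (Complex.pos_iff.1 (hA.trace_nonneg.lt_of_ne' (hA.trace_eq_zero_iff.not.2 hA0))).1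

omit [DecidableEq n] in
lemma re_trace_mul_pos (hA : A.PosDef) (hB : B.PosSemidef) (hB0 : B ≠ 0) :
    0 < (A * B).trace.re := by
  classical
  set R := mPow A (1 / 2)
  have hR : R.PosDef := mPow_posDef hA _
  have hRR : R * R = A := by
    rw [mPow_mul_mPow hA.posSemidef one_half_pos one_half_pos, add_halves,
      mPow_one hA.posSemidef]
  have hRBR : (R * B * R).PosSemidef := by
    simpa only [hR.isHermitian.eq] using hB.mul_mul_conjTranspose_same R
  have hRBR0 : R * B * R ≠ 0 := by
    rwa [Ne, hR.isUnit.mul_left_eq_zero, hR.isUnit.mul_right_eq_zero]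
  rw [← hRR, Matrix.mul_assoc, Matrix.trace_mul_comm]
  exact re_trace_pos hRBR hRBR0

end TracePositivity

section EigenOverlap

variable {A B : Matrix n n ℂ} (hA : A.IsHermitian) (hB : B.IsHermitian)

/-- The unitary change of basis between the chosen eigenbases of two Hermitian matrices; the squared
moduli of its entries are the overlaps of the eigenvectors. -/
def eigenOverlap : Matrix n n ℂ :=
  star (hA.eigenvectorUnitary : Matrix n n ℂ) * hB.eigenvectorUnitary

lemma re_trace_specFun_mul_specFun (f g : ℝ → ℝ) :
    (specFun f A * specFun g B).trace.re =
      ∑ i, ∑ j, Complex.normSq (eigenOverlap hA hB i j) *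
        (f (hA.eigenvalues i) * g (hB.eigenvalues j)) := by
  have htrace : (specFun f A * specFun g B).trace =
      (Matrix.diagonal (fun i => (f (hA.eigenvalues i) : ℂ)) * eigenOverlap hA hB *
        (Matrix.diagonal (fun j => (g (hB.eigenvalues j) : ℂ)) *
          star (eigenOverlap hA hB))).trace := by
    rw [specFun, dif_pos hA, specFun, dif_pos hB, eigenOverlap, star_mul, star_star]
    simp only [Matrix.mul_assoc]
    rw [Matrix.trace_mul_comm]
    simp only [Matrix.mul_assoc]
  rw [htrace, Matrix.trace, Complex.re_sum]
  refine Finset.sum_congr rfl fun i _ => ?_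
  rw [Matrix.diag_apply, Matrix.mul_apply, Complex.re_sum]
  refine Finset.sum_congr rfl fun j _ => ?_
  rw [Matrix.diagonal_mul, Matrix.diagonal_mul, Matrix.star_apply]
  simp [Complex.normSq_apply]
  ring

lemma re_trace_eq_sum_left :
    A.trace.re = ∑ i, ∑ j, Complex.normSq (eigenOverlap hA hB i j) * hA.eigenvalues i := by
  simpa only [specFun_id hA, specFun_one hB, mul_one] using
    re_trace_specFun_mul_specFun hA hB (fun x => x) (fun _ => 1)

lemma re_trace_eq_sum_right :
    B.trace.re = ∑ i, ∑ j, Complex.normSq (eigenOverlap hA hB i j) * hB.eigenvalues j := by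
  simpa only [specFun_one hA, specFun_id hB, one_mul] using
    re_trace_specFun_mul_specFun hA hB (fun _ => 1) (fun x => x)

lemma star_eigenvectorUnitary_mul_mul :
    star (hA.eigenvectorUnitary : Matrix n n ℂ) * A * hA.eigenvectorUnitary =
      Matrix.diagonal fun i => (hA.eigenvalues i : ℂ) := by
  simpa [Unitary.conjStarAlgAut_star_apply, Function.comp_def] using
    hA.conjStarAlgAut_star_eigenvectorUnitary

lemma eq_of_eigenvalues_eq_of_eigenOverlap_ne_zero
    (h : ∀ i j, eigenOverlap hA hB i j ≠ 0 → hA.eigenvalues i = hB.eigenvalues j) : A = B := by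
  set U := hA.eigenvectorUnitary
  set V := hB.eigenvectorUnitary
  have hU : (U : Matrix n n ℂ) * star (U : Matrix n n ℂ) = 1 := Unitary.coe_mul_star_self U
  have hV : (V : Matrix n n ℂ) * star (V : Matrix n n ℂ) = 1 := Unitary.coe_mul_star_self V
  have hcomm : Matrix.diagonal (fun i => (hA.eigenvalues i : ℂ)) * eigenOverlap hA hB =
      eigenOverlap hA hB * Matrix.diagonal (fun j => (hB.eigenvalues j : ℂ)) := by
    ext i j
    rw [Matrix.diagonal_mul, Matrix.mul_diagonal]
    by_cases hij : eigenOverlap hA hB i j = 0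
    · rw [hij, mul_zero, zero_mul]
    · rw [h i j hij, mul_comm]
  have hUV : star (U : Matrix n n ℂ) * A * V = star (U : Matrix n n ℂ) * B * V := calc
    star (U : Matrix n n ℂ) * A * V
        = star (U : Matrix n n ℂ) * A * (U * star (U : Matrix n n ℂ)) * V := by
          rw [hU, Matrix.mul_one]
    _ = Matrix.diagonal (fun i => (hA.eigenvalues i : ℂ)) * eigenOverlap hA hB := by
          rw [← star_eigenvectorUnitary_mul_mul hA, eigenOverlap]
          simp only [Matrix.mul_assoc, U, V]
    _ = eigenOverlap hA hB * Matrix.diagonal (fun j => (hB.eigenvalues j : ℂ)) := hcomm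
    _ = star (U : Matrix n n ℂ) * (V * star (V : Matrix n n ℂ)) * B * V := by
          rw [← star_eigenvectorUnitary_mul_mul hB, eigenOverlap]
          simp only [Matrix.mul_assoc, U, V]
    _ = star (U : Matrix n n ℂ) * B * V := by
          rw [hV, Matrix.mul_one]
  exact (Unitary.toUnits (star U)).isUnit.mul_left_cancel
    ((Unitary.toUnits V).isUnit.mul_right_cancel hUV)

end EigenOverlap

section QuasiEntropy

/-- The Petz quasi-entropy `Tr[ρ^α σ^{1-α}]`, the argument of the logarithm in `petzD`. -/
def petzQ (ρ σ : Matrix n n ℂ) (α : ℝ) : ℝ := (mPow ρ α * mPow σ (1 - α)).trace.re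

variable {A B : Matrix n n ℂ} {α : ℝ}

lemma petzQ_self (hA : A.PosSemidef) (hα : α ∈ Set.Ioo (0 : ℝ) 1) :
    petzQ A A α = A.trace.re := by
  rw [petzQ, mPow_mul_mPow hA hα.1 (sub_pos.2 hα.2), add_sub_cancel, mPow_one hA]

lemma petzQ_pos (hA : A.PosDef) (hB : B.PosSemidef) (hB0 : B ≠ 0) (hα : α < 1) :
    0 < petzQ A B α :=
  re_trace_mul_pos (mPow_posDef hA α) (mPow_posSemidef hB _)
    (mPow_ne_zero hB hB0 (sub_pos.2 hα))

lemma weighted_trace_sub_petzQ (hA : A.IsHermitian) (hB : B.IsHermitian) (α : ℝ) :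
    α * A.trace.re + (1 - α) * B.trace.re - petzQ A B α =
      ∑ i, ∑ j, Complex.normSq (eigenOverlap hA hB i j) *
        (α * hA.eigenvalues i + (1 - α) * hB.eigenvalues j -
          hA.eigenvalues i ^ α * hB.eigenvalues j ^ (1 - α)) := by
  rw [petzQ, mPow, mPow, re_trace_specFun_mul_specFun hA hB, re_trace_eq_sum_left hA hB,
    re_trace_eq_sum_right hA hB]
  simp only [Finset.mul_sum, ← Finset.sum_add_distrib, ← Finset.sum_sub_distrib]
  refine Finset.sum_congr rfl fun i _ => Finset.sum_congr rfl fun j _ => ?_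
  ring

lemma weighted_trace_sub_petzQ_summand_nonneg (hA : A.PosSemidef) (hB : B.PosSemidef)
    (hα : α ∈ Set.Icc (0 : ℝ) 1) (i j : n) :
    0 ≤ Complex.normSq (eigenOverlap hA.isHermitian hB.isHermitian i j) *
      (α * hA.isHermitian.eigenvalues i + (1 - α) * hB.isHermitian.eigenvalues j -
        hA.isHermitian.eigenvalues i ^ α * hB.isHermitian.eigenvalues j ^ (1 - α)) :=
  mul_nonneg (Complex.normSq_nonneg _) <| sub_nonneg.2 <|
    Real.geom_mean_le_arith_mean2_weighted hα.1 (sub_nonneg.2 hα.2) (hA.eigenvalues_nonneg i)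
      (hB.eigenvalues_nonneg j) (add_sub_cancel _ _)

lemma petzQ_le_weighted_trace (hA : A.PosSemidef) (hB : B.PosSemidef)
    (hα : α ∈ Set.Icc (0 : ℝ) 1) : petzQ A B α ≤ α * A.trace.re + (1 - α) * B.trace.re := by
  rw [← sub_nonneg, weighted_trace_sub_petzQ hA.isHermitian hB.isHermitian]
  exact Finset.sum_nonneg fun i _ => Finset.sum_nonneg fun j _ =>
    weighted_trace_sub_petzQ_summand_nonneg hA hB hα i j

lemma eq_of_petzQ_eq_weighted_trace (hA : A.PosSemidef) (hB : B.PosSemidef)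
    (hα : α ∈ Set.Ioo (0 : ℝ) 1)
    (h : petzQ A B α = α * A.trace.re + (1 - α) * B.trace.re) : A = B := by
  have hnonneg := weighted_trace_sub_petzQ_summand_nonneg hA hB (Set.Ioo_subset_Icc_self hα)
  have hsum := weighted_trace_sub_petzQ hA.isHermitian hB.isHermitian α
  rw [h, sub_self, eq_comm,
    Finset.sum_eq_zero_iff_of_nonneg fun i _ => Finset.sum_nonneg fun j _ => hnonneg i j] at hsum
  refine eq_of_eigenvalues_eq_of_eigenOverlap_ne_zero hA.isHermitian hB.isHermitian
    fun i j hij => ?_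
  have hsummand := (Finset.sum_eq_zero_iff_of_nonneg fun j _ => hnonneg i j).1
    (hsum i (Finset.mem_univ i)) j (Finset.mem_univ j)
  have hyoung := (mul_eq_zero.1 hsummand).resolve_left (Complex.normSq_eq_zero.not.2 hij)
  exact (Real.geom_mean_eq_arith_mean2_weighted_iff_of_pos hα.1 (sub_pos.2 hα.2)
    (hA.eigenvalues_nonneg i) (hB.eigenvalues_nonneg j) (add_sub_cancel _ _)).1
    (sub_eq_zero.1 hyoung).symm

end QuasiEntropy

section Density

variable {A F σ τ φ : Matrix n n ℂ} {α : ℝ}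

omit [DecidableEq n] in
lemma IsDensity.re_trace_eq_one (hσ : IsDensity σ) : σ.trace.re = 1 := by
  rw [hσ.2, Complex.one_re]

omit [DecidableEq n] in
lemma IsDensity.ne_zero (hσ : IsDensity σ) : σ ≠ 0 := by
  rintro rfl
  simpa using hσ.re_trace_eq_one

omit [DecidableEq n] in
lemma isDensity_inv_trace_smul (hA : A.PosSemidef) (hA0 : A ≠ 0) :
    IsDensity (A.trace.re⁻¹ • A) := by
  have hpos := re_trace_pos hA hA0
  refine ⟨hA.smul (inv_nonneg.2 hpos.le), Complex.ext ?_ ?_⟩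
  · rw [Matrix.trace_smul, Complex.smul_re, smul_eq_mul, inv_mul_cancel₀ hpos.ne', Complex.one_re]
  · rw [Matrix.trace_smul, Complex.smul_im, ← (Complex.nonneg_iff.1 hA.trace_nonneg).2, smul_zero,
      Complex.one_im]

lemma IsDensity.petzQ_self (hσ : IsDensity σ) (hα : α ∈ Set.Ioo (0 : ℝ) 1) : petzQ σ σ α = 1 := by
  rw [_root_.petzQ_self hσ.1 hα, hσ.re_trace_eq_one]

lemma IsDensity.petzQ_le_one (hσ : IsDensity σ) (hτ : IsDensity τ) (hα : α ∈ Set.Icc (0 : ℝ) 1) :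
    petzQ σ τ α ≤ 1 := by
  simpa [hσ.re_trace_eq_one, hτ.re_trace_eq_one] using petzQ_le_weighted_trace hσ.1 hτ.1 hα

lemma IsDensity.eq_of_one_le_petzQ (hσ : IsDensity σ) (hτ : IsDensity τ)
    (hα : α ∈ Set.Ioo (0 : ℝ) 1) (h : 1 ≤ petzQ σ τ α) : σ = τ := by
  refine eq_of_petzQ_eq_weighted_trace hσ.1 hτ.1 hα ?_
  rw [(hσ.petzQ_le_one hτ (Set.Ioo_subset_Icc_self hα)).antisymm h, hσ.re_trace_eq_one,
    hτ.re_trace_eq_one]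
  ring

lemma eq_inv_trace_smul_mPow_iff (hF : F.PosSemidef) (hσ : IsDensity σ) (hα : 0 < α) :
    σ = (mPow F (1 / α)).trace.re⁻¹ • mPow F (1 / α) ↔ ∃ c : ℝ, 0 < c ∧ F = c • mPow σ α := by
  constructor
  · intro h
    set G := mPow F (1 / α)
    have hG : G.PosSemidef := mPow_posSemidef hF _
    have hN : 0 < G.trace.re := by
      refine re_trace_pos hG fun hG0 => hσ.ne_zero ?_
      rw [h, hG0, smul_zero]
    have hGσ : G = G.trace.re • σ := (inv_smul_eq_iff₀ hN.ne').1 h.symm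
    refine ⟨G.trace.re ^ α, Real.rpow_pos_of_pos hN α, ?_⟩
    rw [← mPow_smul hσ.1 hN.le, ← hGσ,
      mPow_mPow_of_mul_eq_one hF (one_div_pos.2 hα).le (one_div_mul_cancel hα.ne')]
  · rintro ⟨c, hc, rfl⟩
    have hpow : mPow (c • mPow σ α) (1 / α) = c ^ (1 / α) • σ := by
      rw [mPow_smul (mPow_posSemidef hσ.1 α) hc.le,
        mPow_mPow_of_mul_eq_one hσ.1 hα.le (mul_one_div_cancel hα.ne')]
    rw [hpow, Matrix.trace_smul, Complex.smul_re, hσ.re_trace_eq_one, smul_eq_mul, mul_one,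
      inv_smul_smul₀ (Real.rpow_pos_of_pos hc _).ne']

lemma exists_isDensity_eq_smul_mPow (hF : F.PosSemidef) (hF0 : F ≠ 0) (hα : 0 < α) :
    ∃ φ : Matrix n n ℂ, IsDensity φ ∧ ∃ c : ℝ, 0 < c ∧ F = c • mPow φ α :=
  have hφ := isDensity_inv_trace_smul (mPow_posSemidef hF (1 / α))
    (mPow_ne_zero hF hF0 (one_div_pos.2 hα))
  ⟨_, hφ, (eq_inv_trace_smul_mPow_iff hF hφ hα).1 rfl⟩

/- The dominating `τ` is the normalization of `(s σ^{1-α} + t φ^{1-α})^{1/(1-α)}`. -/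
lemma exists_isDensity_interpolation_le_petzQ (hσ : IsDensity σ) (hφ : IsDensity φ)
    (hα : α ∈ Set.Ioo (0 : ℝ) 1) {s t : ℝ} (hs : 0 ≤ s) (ht : 0 ≤ t) (hst : s + t = 1) :
    ∃ τ : Matrix n n ℂ, IsDensity τ ∧ ∀ ρ : Matrix n n ℂ, 0 ≤ petzQ ρ τ α →
      s * petzQ ρ σ α + t * petzQ ρ φ α ≤ petzQ ρ τ α := by
  have hα' : 0 < 1 - α := sub_pos.2 hα.2
  set B := s • mPow σ (1 - α) + t • mPow φ (1 - α) with hB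
  have hσpow := mPow_posSemidef hσ.1 (1 - α)
  have hφpow := mPow_posSemidef hφ.1 (1 - α)
  have hBpsd : B.PosSemidef := (hσpow.smul hs).add (hφpow.smul ht)
  have hB0 : B ≠ 0 := by
    intro h
    have htrace : 0 < s * (mPow σ (1 - α)).trace.re + t * (mPow φ (1 - α)).trace.re :=
      convex_Ioi (0 : ℝ) (re_trace_pos hσpow (mPow_ne_zero hσ.1 hσ.ne_zero hα'))
        (re_trace_pos hφpow (mPow_ne_zero hφ.1 hφ.ne_zero hα')) hs ht hst
    refine htrace.ne' ?_
    simpa [hB] using congrArg (fun M => M.trace.re) h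
  obtain ⟨τ, hτ, c, -, hBτ⟩ := exists_isDensity_eq_smul_mPow hBpsd hB0 hα'
  have hinterp (ρ : Matrix n n ℂ) : s * petzQ ρ σ α + t * petzQ ρ φ α = c * petzQ ρ τ α := by
    have := congrArg (fun M => (mPow ρ α * M).trace.re) hBτ
    simpa [hB, Matrix.mul_add, petzQ] using this
  have hc : c ≤ 1 := calc
    c = s * petzQ τ σ α + t * petzQ τ φ α := by rw [hinterp, hτ.petzQ_self hα, mul_one]
    _ ≤ 1 := convex_Iic (1 : ℝ) (hτ.petzQ_le_one hσ (Set.Ioo_subset_Icc_self hα))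
      (hτ.petzQ_le_one hφ (Set.Ioo_subset_Icc_self hα)) hs ht hst
  exact ⟨τ, hτ, fun ρ hρ => (hinterp ρ).trans_le (mul_le_of_le_one_left hρ hc)⟩

end Density

section Optimality

variable {X : Type*} [Fintype X] {P : X → ℝ} {α : ℝ}

lemma sum_mul_div_le_of_sum_mul_log_le {a b : X → ℝ} (ha : ∀ x, a x ≠ 0)
    (h : ∀ t ∈ Set.Ioo (0 : ℝ) 1,
      ∑ x, P x * Real.log ((1 - t) * a x + t * b x) ≤ ∑ x, P x * Real.log (a x)) :
    ∑ x, P x * (b x / a x) ≤ ∑ x, P x := by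
  set f : ℝ → ℝ := fun t => ∑ x, P x * Real.log ((1 - t) * a x + t * b x) with hf
  have hderiv : HasDerivAt f (∑ x, P x * ((b x - a x) / a x)) 0 := by
    refine HasDerivAt.fun_sum fun x _ => HasDerivAt.const_mul (P x) ?_
    have hlin : HasDerivAt (fun t => (1 - t) * a x + t * b x) (b x - a x) 0 := by
      refine ((((hasDerivAt_id (0 : ℝ)).const_sub 1).mul_const (a x)).add
        ((hasDerivAt_id (0 : ℝ)).mul_const (b x))).congr_deriv ?_
      ring
    simpa using hlin.log (by simpa using ha x)
  have hnonpos : ∑ x, P x * ((b x - a x) / a x) ≤ 0 := by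
    refine le_of_tendsto hderiv.tendsto_slope_zero_right ?_
    filter_upwards [Ioo_mem_nhdsGT zero_lt_one] with t ht
    refine mul_nonpos_of_nonneg_of_nonpos (inv_nonneg.2 ht.1.le) (sub_nonpos.2 ?_)
    simpa [hf] using h t ht
  simpa [sub_div, div_self (ha _), mul_sub] using hnonpos

/-- The gradient of `Σ_x P(x) log Tr[W_x^α σ^{1-α}]` with respect to the variable `σ^{1-α}`. -/
def petzGradient (P : X → ℝ) (W : X → Matrix n n ℂ) (α : ℝ) (σ : Matrix n n ℂ) : Matrix n n ℂ :=
  ∑ x, (P x / petzQ (W x) σ α) • mPow (W x) α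

variable {W : X → Matrix n n ℂ} {σ τ : Matrix n n ℂ}

lemma re_trace_petzGradient_mul_mPow :
    (petzGradient P W α σ * mPow τ (1 - α)).trace.re =
      ∑ x, P x * (petzQ (W x) τ α / petzQ (W x) σ α) := by
  rw [petzGradient, Finset.sum_mul, Matrix.trace_sum, Complex.re_sum]
  refine Finset.sum_congr rfl fun x _ => ?_
  rw [Matrix.smul_mul, Matrix.trace_smul, Complex.smul_re, smul_eq_mul, ← petzQ]
  ring

lemma re_trace_petzGradient_mul_mPow_self (hσ : ∀ x, petzQ (W x) σ α ≠ 0) :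
    (petzGradient P W α σ * mPow σ (1 - α)).trace.re = ∑ x, P x := by
  simp only [re_trace_petzGradient_mul_mPow, div_self (hσ _), mul_one]

lemma petzGradient_posSemidef (hP : ∀ x, 0 ≤ P x) (hW : ∀ x, (W x).PosSemidef)
    (hσ : ∀ x, 0 ≤ petzQ (W x) σ α) : (petzGradient P W α σ).PosSemidef :=
  Matrix.posSemidef_sum _ fun x _ => (mPow_posSemidef (hW x) α).smul (div_nonneg (hP x) (hσ x))

lemma sum_mul_petzD_le_iff (hα : α < 1) :
    ∑ x, P x * petzD (W x) σ α ≤ ∑ x, P x * petzD (W x) τ α ↔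
      ∑ x, P x * Real.log (petzQ (W x) τ α) ≤ ∑ x, P x * Real.log (petzQ (W x) σ α) := by
  have hsum (υ : Matrix n n ℂ) : ∑ x, P x * petzD (W x) υ α =
      1 / (α - 1) * ∑ x, P x * Real.log (petzQ (W x) υ α) := by
    simp only [petzD, petzQ, Finset.mul_sum, mul_left_comm]
  rw [hsum, hsum, mul_le_mul_left_of_neg (one_div_neg.2 (sub_neg.2 hα))]

lemma sum_mul_log_petzQ_le_of_petzGradient_eq (hα : α ∈ Set.Ioo (0 : ℝ) 1) (hP : ∀ x, 0 ≤ P x)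
    (hσ : IsDensity σ) (hτ : IsDensity τ) (hQσ : ∀ x, 0 < petzQ (W x) σ α)
    (hQτ : ∀ x, 0 < petzQ (W x) τ α) {c : ℝ} (hc : 0 ≤ c)
    (hF : petzGradient P W α σ = c • mPow σ α) :
    ∑ x, P x * Real.log (petzQ (W x) τ α) ≤ ∑ x, P x * Real.log (petzQ (W x) σ α) := by
  have hpair (υ : Matrix n n ℂ) :
      (petzGradient P W α σ * mPow υ (1 - α)).trace.re = c * petzQ σ υ α := by
    rw [hF, Matrix.smul_mul, Matrix.trace_smul, Complex.smul_re, smul_eq_mul, ← petzQ]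
  have hcP : c = ∑ x, P x := by
    rw [← re_trace_petzGradient_mul_mPow_self fun x => (hQσ x).ne', hpair, hσ.petzQ_self hα,
      mul_one]
  rw [← sub_nonpos, ← Finset.sum_sub_distrib]
  calc ∑ x, (P x * Real.log (petzQ (W x) τ α) - P x * Real.log (petzQ (W x) σ α))
      ≤ ∑ x, P x * (petzQ (W x) τ α / petzQ (W x) σ α - 1) := by
        refine Finset.sum_le_sum fun x _ => ?_
        rw [← mul_sub, ← Real.log_div (hQτ x).ne' (hQσ x).ne']
        exact mul_le_mul_of_nonneg_left (Real.log_le_sub_one_of_pos (div_pos (hQτ x) (hQσ x)))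
          (hP x)
    _ = c * petzQ σ τ α - c := by
        simp only [mul_sub, mul_one, Finset.sum_sub_distrib]
        rw [← re_trace_petzGradient_mul_mPow, hpair, ← hcP]
    _ ≤ 0 := sub_nonpos.2 <| mul_le_of_le_one_right hc <|
        hσ.petzQ_le_one hτ (Set.Ioo_subset_Icc_self hα)

lemma re_trace_petzGradient_mul_mPow_le_of_maximizer (hα : α ∈ Set.Ioo (0 : ℝ) 1)
    (hP : ∀ x, 0 ≤ P x) (hQ : ∀ τ : Matrix n n ℂ, IsDensity τ → ∀ x, 0 < petzQ (W x) τ α)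
    (hσ : IsDensity σ) (hτ : IsDensity τ)
    (hmax : ∀ υ : Matrix n n ℂ, IsDensity υ →
      ∑ x, P x * Real.log (petzQ (W x) υ α) ≤ ∑ x, P x * Real.log (petzQ (W x) σ α)) :
    (petzGradient P W α σ * mPow τ (1 - α)).trace.re ≤ ∑ x, P x := by
  rw [re_trace_petzGradient_mul_mPow]
  refine sum_mul_div_le_of_sum_mul_log_le (fun x => (hQ σ hσ x).ne') fun t ht => ?_
  have ht' : 0 < 1 - t := sub_pos.2 ht.2
  obtain ⟨υ, hυ, hle⟩ := exists_isDensity_interpolation_le_petzQ hσ hτ hα ht'.le ht.1.le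
    (sub_add_cancel 1 t)
  refine (Finset.sum_le_sum fun x _ => ?_).trans (hmax υ hυ)
  have hpos := add_pos (mul_pos ht' (hQ σ hσ x)) (mul_pos ht.1 (hQ τ hτ x))
  exact mul_le_mul_of_nonneg_left (Real.log_le_log hpos (hle (W x) (hQ υ hυ x).le)) (hP x)

lemma exists_petzGradient_eq_of_maximizer (hα : α ∈ Set.Ioo (0 : ℝ) 1) (hP : ∀ x, 0 ≤ P x)
    (hPsum : ∑ x, P x ≠ 0) (hW : ∀ x, (W x).PosSemidef)
    (hQ : ∀ τ : Matrix n n ℂ, IsDensity τ → ∀ x, 0 < petzQ (W x) τ α) (hσ : IsDensity σ)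
    (hmax : ∀ τ : Matrix n n ℂ, IsDensity τ →
      ∑ x, P x * Real.log (petzQ (W x) τ α) ≤ ∑ x, P x * Real.log (petzQ (W x) σ α)) :
    ∃ c : ℝ, 0 < c ∧ petzGradient P W α σ = c • mPow σ α := by
  have hself := re_trace_petzGradient_mul_mPow_self (P := P) fun x => (hQ σ hσ x).ne'
  have hF := petzGradient_posSemidef hP hW fun x => (hQ σ hσ x).le
  have hF0 : petzGradient P W α σ ≠ 0 := by
    intro h
    apply hPsum
    rw [← hself, h, Matrix.zero_mul, Matrix.trace_zero, Complex.zero_re]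
  obtain ⟨φ, hφ, c, hc, hFφ⟩ := exists_isDensity_eq_smul_mPow hF hF0 hα.1
  have hpair (υ : Matrix n n ℂ) :
      (petzGradient P W α σ * mPow υ (1 - α)).trace.re = c * petzQ φ υ α := by
    rw [hFφ, Matrix.smul_mul, Matrix.trace_smul, Complex.smul_re, smul_eq_mul, ← petzQ]
  have hle : c * 1 ≤ c * petzQ φ σ α := calc
    c * 1 = (petzGradient P W α σ * mPow φ (1 - α)).trace.re := by
      rw [hpair, hφ.petzQ_self hα]
    _ ≤ ∑ x, P x := re_trace_petzGradient_mul_mPow_le_of_maximizer hα hP hQ hσ hφ hmax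
    _ = c * petzQ φ σ α := by rw [← hself, hpair]
  obtain rfl : φ = σ := hφ.eq_of_one_le_petzQ hσ hα (le_of_mul_le_mul_left hle hc)
  exact ⟨c, hc, hFφ⟩

theorem renyi_minimizer_fixed_point_general (hα : α ∈ Set.Ioo (0 : ℝ) 1) (hP : ∀ x, 0 ≤ P x)
    (hPsum : ∑ x, P x ≠ 0) (hW : ∀ x, (W x).PosDef) (hσ : IsDensity σ) :
    (∀ τ : Matrix n n ℂ, IsDensity τ →
        ∑ x, P x * petzD (W x) σ α ≤ ∑ x, P x * petzD (W x) τ α) ↔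
      σ = (mPow (petzGradient P W α σ) (1 / α)).trace.re⁻¹ •
        mPow (petzGradient P W α σ) (1 / α) := by
  have hQ (τ : Matrix n n ℂ) (hτ : IsDensity τ) (x : X) : 0 < petzQ (W x) τ α :=
    petzQ_pos (hW x) hτ.1 hτ.ne_zero hα.2
  have hWpsd (x : X) := (hW x).posSemidef
  have hF := petzGradient_posSemidef hP hWpsd fun x => (hQ σ hσ x).le
  simp only [sum_mul_petzD_le_iff hα.2, eq_inv_trace_smul_mPow_iff hF hσ hα.1]
  constructor
  · exact exists_petzGradient_eq_of_maximizer hα hP hPsum hWpsd hQ hσ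
  · rintro ⟨c, hc, hFσ⟩ τ hτ
    exact sum_mul_log_petzQ_le_of_petzGradient_eq hα hP hσ hτ (hQ σ hσ) (hQ τ hτ) hc.le hFσ

lemma fixedPtMap_eq_mPow_petzGradient {d : ℕ} (P : X → ℝ) (W : X → Matrix (Fin d) (Fin d) ℂ)
    (α : ℝ) (σ : Matrix (Fin d) (Fin d) ℂ) :
    fixedPtMap P W α σ = mPow (petzGradient P W α σ) (1 / α) := by
  simp only [fixedPtMap, petzGradient, petzQ, Complex.coe_smul]

end Optimality

/-- Fixed-point characterization of the Rényi-divergence minimizer: a density matrix `σ`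
minimizes `σ ↦ Σ_x P(x) D_α(W_x‖σ)` over all density matrices iff
`σ = N⁻¹ (Σ_x P(x) W_x^α / Tr[W_x^α σ^{1-α}])^{1/α}` with `N` the normalizing trace. -/
theorem renyi_minimizer_fixed_point {d : ℕ} {X : Type*} [Fintype X]
    (α : ℝ) (hα : α ∈ Set.Ioo (0 : ℝ) 1)
    (P : X → ℝ) (hP0 : ∀ x, 0 ≤ P x) (hP1 : ∑ x, P x = 1)
    (W : X → Matrix (Fin d) (Fin d) ℂ)
    (hWpd : ∀ x, (W x).PosDef) (hW1 : ∀ x, (W x).trace = 1)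
    (σ : Matrix (Fin d) (Fin d) ℂ) (hσ : IsDensity σ) :
    (∀ τ : Matrix (Fin d) (Fin d) ℂ, IsDensity τ →
        (∑ x, P x * petzD (W x) σ α) ≤ ∑ x, P x * petzD (W x) τ α) ↔
      σ = ((((fixedPtMap P W α σ).trace).re : ℂ))⁻¹ • fixedPtMap P W α σ := by
  rw [← Complex.ofReal_inv, Complex.coe_smul, fixedPtMap_eq_mPow_petzGradient]
  exact renyi_minimizer_fixed_point_general hα hP0 (hP1 ▸ one_ne_zero) hWpd hσ

end
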